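/- The polynomial X⁸ + 24X⁴ + 16 is irreducible over ℚ. -/

import Mathlib

open Polynomial

lemma comp_sq_irred_aux {K : Type} [Field K] (f : K[X]) (hm : f.Monic) (hf : Irreducible f)
    (h : ∀ g : K[X], g.natDegree < f.natDegree → ¬ f ∣ g ^ 2 - X) :
    Irreducible (f.comp (X ^ 2)) := by
  refine Polynomial.irreducible_comp hm (monic_X_pow 2) hf ?_
  intro E _ _ x hx
  rw [Polynomial.map_pow, map_X]
  refine X_pow_sub_C_irreducible_of_prime Nat.prime_two ?_
  intro b hb
  have hint : IsIntegral K x := by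
    by_contra hc
    rw [minpoly.eq_zero hc] at hx
    exact hf.ne_zero hx.symm
  have hmp : minpoly K (IntermediateField.AdjoinSimple.gen K x) = f := by
    rw [IntermediateField.minpoly_gen, hx]
  obtain ⟨g, hg, hg'⟩ := (IntermediateField.adjoin.powerBasis hint).exists_eq_aeval b
  rw [IntermediateField.adjoin.powerBasis_gen] at hg'
  rw [IntermediateField.adjoin.powerBasis_dim, hx] at hg
  refine h g hg ?_
  rw [← hmp]
  apply minpoly.dvd
  simp [← hg', hb]

lemma comp_sq_irred (f : ℚ[X]) (hm : f.Monic) (hf : Irreducible f)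
    (h : ∀ g : ℚ[X], g.natDegree < f.natDegree → ¬ f ∣ g ^ 2 - X) :
    Irreducible (f.comp (X ^ 2)) := comp_sq_irred_aux f hm hf h

lemma no_sq_two (p s : ℚ) (h : p ^ 2 = 2 * s ^ 2) : s = 0 := by
  by_contra hs
  have h2 : (p / s) ^ 2 = 2 := by field_simp; linarith
  have := irrational_sqrt_two
  apply this
  refine ⟨|p / s|, ?_⟩
  have h3 : ((p / s : ℚ) : ℝ) ^ 2 = 2 := by exact_mod_cast h2
  rw [← h3, Real.sqrt_sq_eq_abs]
  push_cast
  rfl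

lemma arith (p q r s : ℚ) (h1 : p ^ 2 + 2 * q ^ 2 = r ^ 2 + 2 * s ^ 2) (h2 : p * q = r * s)
    (h3 : p * r + 2 * q * s = -1) (h4 : p * s + q * r = 1) : False := by
  have h5 : (p ^ 2 - r ^ 2) * (p ^ 2 - 2 * s ^ 2) = 0 := by
    have : (p * q) ^ 2 = (r * s) ^ 2 := by rw [h2]
    linear_combination p ^ 2 * h1 - 2 * this
  have hN : (p ^ 2 - 2 * q ^ 2) * (r ^ 2 - 2 * s ^ 2) = -1 := by
    linear_combination (p * r + 2 * q * s - 1) * h3 - 2 * (p * s + q * r + 1) * h4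
  rcases mul_eq_zero.1 h5 with h | h
  · have e1 : p ^ 2 = r ^ 2 := by linarith
    have e2 : q ^ 2 = s ^ 2 := by linarith
    rw [e1, e2] at hN
    nlinarith [sq_nonneg (r ^ 2 - 2 * s ^ 2)]
  · have e1 : p ^ 2 = 2 * s ^ 2 := by linarith
    have e2 : r ^ 2 = 2 * q ^ 2 := by linarith
    have hs := no_sq_two _ _ e1
    have hq := no_sq_two _ _ e2
    subst hs; subst hq
    norm_num at h4

lemma irr2 : Irreducible (X ^ 2 + 24 * X + 16 : ℚ[X]) := by
  have hd : (X ^ 2 + 24 * X + 16 : ℚ[X]).natDegree = 2 := by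
    compute_degree!
  rw [Polynomial.irreducible_iff_roots_eq_zero_of_degree_le_three (by omega) (by omega)]
  apply Multiset.eq_zero_of_forall_notMem
  intro a ha
  have h := (mem_roots'.1 ha).2
  simp [IsRoot] at h
  have := no_sq_two (a + 12) 8 (by linear_combination h)
  norm_num at this

lemma irr4 : Irreducible (X ^ 4 + 24 * X ^ 2 + 16 : ℚ[X]) := by
  have hd : (X ^ 2 + 24 * X + 16 : ℚ[X]).natDegree = 2 := by
    compute_degree!
  have hm : (X ^ 2 + 24 * X + 16 : ℚ[X]).Monic := by
    monicity!
  have := comp_sq_irred _ hm irr2 ?_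
  · convert this using 1
    simp
    ring
  intro g hg hdvd
  rw [hd] at hg
  obtain ⟨a, b, rfl⟩ : ∃ a b : ℚ, g = C a + C b * X :=
    ⟨g.coeff 0, g.coeff 1, by
      rw [g.as_sum_range' 2 hg]
      simp [Finset.sum_range_succ, ← C_mul_X_pow_eq_monomial]⟩
  have hr : (X ^ 2 + 24 * X + 16 : ℚ[X]) ∣
      C (2 * a * b - 24 * b ^ 2 - 1) * X + C (a ^ 2 - 16 * b ^ 2) := by
    have := dvd_sub hdvd (dvd_mul_right (X ^ 2 + 24 * X + 16 : ℚ[X]) (C (b ^ 2)))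
    convert this using 1
    simp only [map_sub, map_mul, map_pow, map_one, map_ofNat]
    ring
  have h0 := Polynomial.eq_zero_of_dvd_of_natDegree_lt hr (by
    rw [hd]; refine lt_of_le_of_lt (b := 1) ?_ (by norm_num); compute_degree)
  have c0 := congrArg (fun p => coeff p 0) h0
  have c1 := congrArg (fun p => coeff p 1) h0
  simp only [coeff_add, coeff_C_mul, coeff_X, coeff_C, coeff_zero] at c0 c1
  norm_num at c0 c1
  nlinarith [sq_nonneg (a - 12 * b), sq_nonneg b]

lemma irr8 : Irreducible (X ^ 8 + 24 * X ^ 4 + 16 : ℚ[X]) := by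
  have hd : (X ^ 4 + 24 * X ^ 2 + 16 : ℚ[X]).natDegree = 4 := by
    compute_degree!
  have hm : (X ^ 4 + 24 * X ^ 2 + 16 : ℚ[X]).Monic := by
    monicity!
  have := comp_sq_irred _ hm irr4 ?_
  · convert this using 1
    simp
    ring
  intro g hg hdvd
  rw [hd] at hg
  obtain ⟨a, b, c, d, rfl⟩ : ∃ a b c d : ℚ, g = C a + C b * X + C c * X ^ 2 + C d * X ^ 3 :=
    ⟨g.coeff 0, g.coeff 1, g.coeff 2, g.coeff 3, by
      conv_lhs => rw [g.as_sum_range' 4 hg]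
      simp [Finset.sum_range_succ, ← C_mul_X_pow_eq_monomial]⟩
  have hr : (X ^ 4 + 24 * X ^ 2 + 16 : ℚ[X]) ∣
      C (2 * a * d + 2 * b * c - 48 * c * d) * X ^ 3
      + C (2 * a * c + b ^ 2 - 24 * (2 * b * d + c ^ 2) + 560 * d ^ 2) * X ^ 2
      + C (2 * a * b - 32 * c * d - 1) * X
      + C (a ^ 2 - 16 * (2 * b * d + c ^ 2) + 384 * d ^ 2) := by
    have := dvd_sub hdvd (dvd_mul_right (X ^ 4 + 24 * X ^ 2 + 16 : ℚ[X])
      (C (d ^ 2) * X ^ 2 + C (2 * c * d) * X + C (2 * b * d + c ^ 2 - 24 * d ^ 2)))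
    convert this using 1
    simp only [map_sub, map_add, map_mul, map_pow, map_one, map_ofNat]
    ring
  have h0 := Polynomial.eq_zero_of_dvd_of_natDegree_lt hr (by
    rw [hd]; refine lt_of_le_of_lt (b := 3) ?_ (by norm_num); compute_degree)
  have c0 := congrArg (fun p => coeff p 0) h0
  have c1 := congrArg (fun p => coeff p 1) h0
  have c2 := congrArg (fun p => coeff p 2) h0
  have c3 := congrArg (fun p => coeff p 3) h0
  simp only [coeff_add, coeff_C_mul, coeff_X, coeff_C, coeff_X_pow, coeff_zero] at c0 c1 c2 c3
  norm_num at c0 c1 c2 c3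
  refine arith (a - 12 * c) (8 * c) (56 * d - 2 * b) (2 * b - 40 * d) ?_ ?_ ?_ ?_
  · linear_combination c0 - 12 * c2
  · linear_combination 4 * c2
  · linear_combination 28 * c3 - c1
  · linear_combination c1 - 20 * c3

/-- The polynomial `X⁸ + 24X⁴ + 16` is irreducible over `ℚ`. -/
theorem octic1_irreducible : Irreducible (X^8 + 24*X^4 + 16 : ℚ[X]) := irr8
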